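/- (Trend to equilibrium, spatially homogeneous case.) Let F : [0,∞) → ℝ^N be differentiable and bounded, solving F′(t) = Q^α(F(t)) for all t > 0, and assume there exist η > 0 and t_0 ≥ 0 such that η ≤ F_i(t) ≤ 1/α − η for all i ∈ {1,…,N} and all t ≥ t_0. Assume the model is normal. Then F(t) converges as t → ∞ to an equilibrium distribution P, and P is the unique equilibrium distribution with the same moments as F, i.e., ⟨1,P⟩ = ⟨1,F(t)⟩, ⟨p^i,P⟩ = ⟨p^i,F(t)⟩ for i = 1,…,d, and ⟨|p|²,P⟩ = ⟨|p|²,F(t)⟩ (these moments of F are independent of t). -/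

import Mathlib

open Real Finset Filter Set

noncomputable def Psi (α y : ℝ) : ℝ :=
  (1 - α * y) ^ α * (1 + (1 - α) * y) ^ (1 - α)

noncomputable def Qop {N : ℕ} (α : ℝ) (Γ : Fin N → Fin N → Fin N → Fin N → ℝ)
    (F : Fin N → ℝ) : Fin N → ℝ := fun i =>
  ∑ j, ∑ k, ∑ l, Γ i j k l *
    (F k * F l * Psi α (F i) * Psi α (F j) - F i * F j * Psi α (F k) * Psi α (F l))

def dotN {N : ℕ} (u v : Fin N → ℝ) : ℝ := ∑ i, u i * v i

def GammaOK {N d : ℕ} (p : Fin N → Fin d → ℝ)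
    (Γ : Fin N → Fin N → Fin N → Fin N → ℝ) : Prop :=
  (∀ i j k l, 0 ≤ Γ i j k l) ∧
  (∀ i j k l, Γ i j k l = Γ j i k l) ∧
  (∀ i j k l, Γ i j k l = Γ k l i j) ∧
  (∀ i j k l, Γ i j k l ≠ 0 →
    (∀ m, p i m + p j m = p k m + p l m) ∧
    (∑ m, (p i m) ^ 2) + (∑ m, (p j m) ^ 2) = (∑ m, (p k m) ^ 2) + (∑ m, (p l m) ^ 2))

def IsCollInv {N : ℕ} (Γ : Fin N → Fin N → Fin N → Fin N → ℝ) (φ : Fin N → ℝ) : Prop :=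
  ∀ i j k l, Γ i j k l ≠ 0 → φ i + φ j = φ k + φ l

def IsNormal {N d : ℕ} (p : Fin N → Fin d → ℝ)
    (Γ : Fin N → Fin N → Fin N → Fin N → ℝ) : Prop :=
  ∀ φ : Fin N → ℝ, IsCollInv Γ φ →
    ∃ (a c : ℝ) (b : Fin d → ℝ), ∀ i, φ i = a + (∑ m, b m * p i m) + c * ∑ m, (p i m) ^ 2

def IsEquilib {N d : ℕ} (α : ℝ) (p : Fin N → Fin d → ℝ) (P : Fin N → ℝ) : Prop :=
  (∀ i, 0 < P i ∧ P i < 1 / α) ∧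
  ∃ (K : ℝ) (b : Fin d → ℝ) (c : ℝ), 0 < K ∧
    ∀ i, P i / Psi α (P i) = K * Real.exp (-(∑ m, b m * p i m) - c * ∑ m, (p i m) ^ 2)

noncomputable def muF (α y : ℝ) : ℝ :=
  y * Real.log y + (1 - α * y) * Real.log (1 - α * y)
    - (1 + (1 - α) * y) * Real.log (1 + (1 - α) * y)

noncomputable def Rfun {N : ℕ} (α : ℝ) (P : Fin N → ℝ) (i : Fin N) : ℝ :=
  P i * (1 - α * P i) * (1 + (1 - α) * P i)

noncomputable def Pcoef {N : ℕ} (α : ℝ) (P : Fin N → ℝ) (i j k l : Fin N) : ℝ :=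
  P i * P j * Psi α (P k) * Psi α (P l) / Real.sqrt (Rfun α P i)

noncomputable def Lop {N : ℕ} (α : ℝ) (Γ : Fin N → Fin N → Fin N → Fin N → ℝ)
    (P : Fin N → ℝ) (f : Fin N → ℝ) : Fin N → ℝ := fun i =>
  ∑ j, ∑ k, ∑ l, Γ i j k l / Real.sqrt (Rfun α P i) *
    (Pcoef α P i j k l * f i + Pcoef α P j i k l * f j
      - Pcoef α P k l i j * f k - Pcoef α P l k i j * f l)

/-! The idea is LaSalle's invariance principle with the entropy `H f = ∑ i, muF α (f i)` as strict
Lyapunov function. The derivative of `muF α` is the chemical potential `log (y / Psi α y)`, so that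
the symmetries of `Γ` give `4 H' = ∑ w (x - y) (exp y - exp x) ≤ 0`, where `x` and `y` are the total
potentials before and after a collision and `w` is `Γ` times a positive factor. A bounded
monotone function has a derivative that tends to `0` along some sequence, hence compactness
yields a cluster point `P` without entropy production, whose chemical potential is a collision
invariant `φ`. Any other cluster point `Q` satisfies `H Q = H P` by monotonicity and `⟨φ, Q⟩ =
⟨φ, P⟩` by conservation, while strict convexity of `muF α` makes `P` the only minimizer of `H`
with the given value of `⟨φ, ·⟩`; thus `Q = P`. The same minimization property shows that an
equilibrium is determined by its moments. -/

section Calculus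

open scoped Topology

lemma eq_of_mapClusterPt_of_tendsto {ι X : Type*} [TopologicalSpace X] [T2Space X]
    {l : Filter ι} {u : ι → X} {a b : X} (ha : MapClusterPt a l u) (hb : Tendsto u l (𝓝 b)) :
    a = b :=
  eq_of_nhds_neBot (ha.neBot.mono (inf_le_inf_left _ hb))

lemma tangent_lt_of_strictConvexOn {S : Set ℝ} {f : ℝ → ℝ} {f' x y : ℝ}
    (hf : StrictConvexOn ℝ S f) (hx : x ∈ S) (hy : y ∈ S) (hxy : y ≠ x)
    (hd : HasDerivAt f f' x) : f x + f' * (y - x) < f y := by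
  rcases hxy.lt_or_gt with h | h
  · have := hf.slope_lt_of_hasDerivAt hy hx h hd
    rw [slope_def_field, div_lt_iff₀ (sub_pos.2 h)] at this
    linarith
  · have := hf.lt_slope_of_hasDerivAt hx hy h hd
    rw [slope_def_field, lt_div_iff₀ (sub_pos.2 h)] at this
    linarith

lemma eq_of_hasDerivAt_zero_of_continuousOn_Ici {g : ℝ → ℝ} {a s t : ℝ}
    (hc : ContinuousOn g (Set.Ici a)) (hd : ∀ r, a < r → HasDerivAt g 0 r)
    (hs : a ≤ s) (ht : a ≤ t) : g s = g t := by
  have eq_start : ∀ r, a ≤ r → g r = g a := fun r hr => by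
    rcases hr.eq_or_lt with rfl | hr
    · rfl
    obtain ⟨_, -, hslope⟩ := exists_hasDerivAt_eq_slope g 0 hr
      (hc.mono Set.Icc_subset_Ici_self) fun q hq => hd q hq.1
    rw [Pi.zero_apply, eq_comm, div_eq_zero_iff] at hslope
    exact sub_eq_zero.1 (hslope.resolve_right (sub_pos.2 hr).ne')
  rw [eq_start s hs, eq_start t ht]

lemma exists_seq_tendsto_deriv_zero {h h' : ℝ → ℝ} {L : ℝ}
    (hd : ∀ᶠ t in atTop, HasDerivAt h (h' t) t) (hL : Tendsto h atTop (𝓝 L)) :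
    ∃ s : ℕ → ℝ, Tendsto s atTop atTop ∧ Tendsto (h' ∘ s) atTop (𝓝 0) := by
  obtain ⟨T, hT⟩ := eventually_atTop.1 hd
  have exists_slope : ∀ n : ℕ, ∃ c ∈ Set.Ioo (T + n) (T + n + 1),
      h' c = h (T + n + 1) - h (T + n) := fun n => by
    have hdn : ∀ t, T + n ≤ t → HasDerivAt h (h' t) t := fun t ht =>
      hT t ((le_add_of_nonneg_right n.cast_nonneg).trans ht)
    obtain ⟨c, hc, hslope⟩ := exists_hasDerivAt_eq_slope h h' (lt_add_one (T + (n : ℝ)))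
      (fun t ht => (hdn t ht.1).continuousAt.continuousWithinAt) fun t ht => hdn t ht.1.le
    exact ⟨c, hc, by rw [hslope, add_sub_cancel_left, div_one]⟩
  choose s hs hs' using exists_slope
  have hn : Tendsto (fun n : ℕ => T + (n : ℝ)) atTop atTop :=
    tendsto_atTop_add_const_left _ T tendsto_natCast_atTop_atTop
  refine ⟨s, tendsto_atTop_mono (fun n => (hs n).1.le) hn, ?_⟩
  have hdiff := (hL.comp (tendsto_atTop_add_const_right _ 1 hn)).sub (hL.comp hn)
  rw [sub_self] at hdiff
  exact hdiff.congr fun n => (hs' n).symm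

lemma exists_tendsto_of_antitoneOn_Ici {h : ℝ → ℝ} {T : ℝ} (hanti : AntitoneOn h (Set.Ici T))
    (hbdd : BddBelow (h '' Set.Ici T)) : ∃ L, Tendsto h atTop (𝓝 L) := by
  have hanti' : Antitone fun t => h (max T t) := fun s t hst =>
    hanti (le_max_left T s) (le_max_left T t) (max_le_max_left T hst)
  have hbdd' : BddBelow (Set.range fun t => h (max T t)) :=
    hbdd.mono (Set.range_subset_iff.2 fun t => Set.mem_image_of_mem h (le_max_left T t))
  refine ⟨_, (tendsto_atTop_ciInf hanti' hbdd').congr' ?_⟩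
  filter_upwards [eventually_ge_atTop T] with t ht
  rw [max_eq_right ht]

end Calculus

section Lyapunov

open scoped Topology

variable {X : Type*} [TopologicalSpace X] {x : ℝ → X} {K : Set X} {V D : X → ℝ}

lemma exists_tendsto_lyapunov (hK : IsCompact K) (hxK : ∀ᶠ t in atTop, x t ∈ K)
    (hV : ContinuousOn V K) (hD : ∀ q ∈ K, D q ≤ 0)
    (hderiv : ∀ᶠ t in atTop, HasDerivAt (V ∘ x) (D (x t)) t) :
    ∃ L, Tendsto (V ∘ x) atTop (𝓝 L) := by
  obtain ⟨T, hT⟩ := eventually_atTop.1 (hxK.and hderiv)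
  refine exists_tendsto_of_antitoneOn_Ici (T := T) ?_ ?_
  · refine antitoneOn_of_hasDerivWithinAt_nonpos (f' := D ∘ x) (convex_Ici T)
      (fun t ht => (hT t ht).2.continuousAt.continuousWithinAt)
      (fun t ht => (hT t (interior_subset ht)).2.hasDerivWithinAt)
      (fun t ht => hD _ (hT t (interior_subset ht)).1)
  · refine (hK.bddBelow_image hV).mono ?_
    rintro _ ⟨t, ht, rfl⟩
    exact Set.mem_image_of_mem V (hT t ht).1

theorem exists_tendsto_of_lyapunov (hK : IsCompact K) (hxK : ∀ᶠ t in atTop, x t ∈ K)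
    (hV : ∀ q ∈ K, ContinuousAt V q) (hDcont : ∀ q ∈ K, ContinuousAt D q)
    (hD : ∀ q ∈ K, D q ≤ 0) (hderiv : ∀ᶠ t in atTop, HasDerivAt (V ∘ x) (D (x t)) t)
    (huniq : ∀ P ∈ K, D P = 0 → MapClusterPt P atTop x →
      ∀ Q ∈ K, MapClusterPt Q atTop x → V Q = V P → Q = P) :
    ∃ P ∈ K, D P = 0 ∧ Tendsto x atTop (𝓝 P) := by
  obtain ⟨L, hL⟩ := exists_tendsto_lyapunov hK hxK (fun q hq => (hV q hq).continuousWithinAt)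
    hD hderiv
  have V_cluster : ∀ q ∈ K, MapClusterPt q atTop x → V q = L := fun q hq hqx =>
    eq_of_mapClusterPt_of_tendsto (hqx.continuousAt_comp (hV q hq)) hL
  obtain ⟨s, hs, hDs⟩ := exists_seq_tendsto_deriv_zero hderiv hL
  obtain ⟨P, hPK, hPs⟩ := hK.exists_mapClusterPt_of_frequently (hs.eventually hxK).frequently
  have hDP : D P = 0 :=
    eq_of_mapClusterPt_of_tendsto (hPs.continuousAt_comp (hDcont P hPK)) hDs
  have hPx : MapClusterPt P atTop x := hPs.of_comp hs
  refine ⟨P, hPK, hDP, hK.tendsto_nhds_of_unique_mapClusterPt hxK fun Q hQK hQx => ?_⟩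
  exact huniq P hPK hDP hPx Q hQK hQx ((V_cluster Q hQK hQx).trans (V_cluster P hPK hPx).symm)

end Lyapunov

section FillingFactor

variable {α y : ℝ}

/-- The occupation numbers at which both factors of `Psi α` and `muF α` have positive argument.
It is the interval `(0, 1/α)` for `0 < α`; written without division it is also the right phase
space when `α = 0`. -/
def occupationRange (α : ℝ) : Set ℝ := {y | 0 < y ∧ α * y < 1}

/-- The chemical potential: the derivative of `muF α`, equal to `log (y / Psi α y)` on
`occupationRange α`. -/
noncomputable def chemPot (α y : ℝ) : ℝ :=
  Real.log y - α * Real.log (1 - α * y) - (1 - α) * Real.log (1 + (1 - α) * y)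

lemma mem_occupationRange_iff (hα : 0 < α) : y ∈ occupationRange α ↔ 0 < y ∧ y < 1 / α :=
  and_congr_right fun _ => (lt_div_iff₀' hα).symm

lemma one_sub_mul_pos (hy : y ∈ occupationRange α) : 0 < 1 - α * y := sub_pos.2 hy.2

lemma one_add_mul_pos (hy : y ∈ occupationRange α) : 0 < 1 + (1 - α) * y := by
  linarith [hy.1, hy.2]

lemma isOpen_occupationRange (α : ℝ) : IsOpen (occupationRange α) :=
  (isOpen_lt continuous_const continuous_id).inter
    (isOpen_lt (continuous_const_mul α) continuous_const)

lemma convex_occupationRange (α : ℝ) : Convex ℝ (occupationRange α) :=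
  (convex_Ioi 0).inter (convex_halfSpace_lt (LinearMap.mulLeft ℝ α).isLinear 1)

lemma Psi_pos (hy : y ∈ occupationRange α) : 0 < Psi α y :=
  mul_pos (Real.rpow_pos_of_pos (one_sub_mul_pos hy) _)
    (Real.rpow_pos_of_pos (one_add_mul_pos hy) _)

lemma continuousAt_Psi (hy : y ∈ occupationRange α) : ContinuousAt (Psi α) y :=
  ((by fun_prop : ContinuousAt (fun y : ℝ => 1 - α * y) y).rpow_const
      (Or.inl (one_sub_mul_pos hy).ne')).mul
    ((by fun_prop : ContinuousAt (fun y : ℝ => 1 + (1 - α) * y) y).rpow_const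
      (Or.inl (one_add_mul_pos hy).ne'))

lemma exp_chemPot (hy : y ∈ occupationRange α) : Real.exp (chemPot α y) = y / Psi α y := by
  rw [chemPot, Psi, Real.exp_sub, Real.exp_sub, Real.exp_log hy.1, div_div,
    Real.rpow_def_of_pos (one_sub_mul_pos hy), Real.rpow_def_of_pos (one_add_mul_pos hy),
    mul_comm α (Real.log _), mul_comm (1 - α) (Real.log _)]

lemma hasDerivAt_one_sub_mul (a y : ℝ) : HasDerivAt (fun y => 1 - a * y) (-a) y := by
  simpa only [mul_one] using ((hasDerivAt_id' y).const_mul a).const_sub 1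

lemma hasDerivAt_one_add_mul (a y : ℝ) : HasDerivAt (fun y => 1 + a * y) a y := by
  simpa only [mul_one] using ((hasDerivAt_id' y).const_mul a).const_add 1

lemma hasDerivAt_muF (hy : y ∈ occupationRange α) : HasDerivAt (muF α) (chemPot α y) y := by
  have hlog := Real.hasDerivAt_mul_log hy.1.ne'
  have hlog_sub := (Real.hasDerivAt_mul_log (one_sub_mul_pos hy).ne').comp y
    (hasDerivAt_one_sub_mul α y)
  have hlog_add := (Real.hasDerivAt_mul_log (one_add_mul_pos hy).ne').comp y
    (hasDerivAt_one_add_mul (1 - α) y)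
  refine ((hlog.add hlog_sub).sub hlog_add).congr_deriv ?_
  rw [chemPot]
  ring

lemma hasDerivAt_chemPot (hy : y ∈ occupationRange α) :
    HasDerivAt (chemPot α) (1 / (y * (1 - α * y) * (1 + (1 - α) * y))) y := by
  have hlog := Real.hasDerivAt_log hy.1.ne'
  have hlog_sub := (hasDerivAt_one_sub_mul α y).log (one_sub_mul_pos hy).ne'
  have hlog_add := (hasDerivAt_one_add_mul (1 - α) y).log (one_add_mul_pos hy).ne'
  refine ((hlog.sub (hlog_sub.const_mul α)).sub (hlog_add.const_mul (1 - α))).congr_deriv ?_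
  have hy₀ := hy.1.ne'
  have hu₀ := (one_sub_mul_pos hy).ne'
  have hv₀ := (one_add_mul_pos hy).ne'
  generalize hu : 1 - α * y = u at hu₀ ⊢
  generalize hv : 1 + (1 - α) * y = v at hv₀ ⊢
  field_simp
  rw [← hu, ← hv]
  ring

lemma strictMonoOn_chemPot (α : ℝ) : StrictMonoOn (chemPot α) (occupationRange α) := by
  refine strictMonoOn_of_deriv_pos (convex_occupationRange α)
    (fun y hy => (hasDerivAt_chemPot hy).continuousAt.continuousWithinAt) fun y hy => ?_
  replace hy := interior_subset hy
  rw [(hasDerivAt_chemPot hy).deriv]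
  exact one_div_pos.2 (mul_pos (mul_pos hy.1 (one_sub_mul_pos hy)) (one_add_mul_pos hy))

lemma strictConvexOn_muF (α : ℝ) : StrictConvexOn ℝ (occupationRange α) (muF α) := by
  refine StrictMonoOn.strictConvexOn_of_deriv (convex_occupationRange α)
    (fun y hy => (hasDerivAt_muF hy).continuousAt.continuousWithinAt) ?_
  rw [(isOpen_occupationRange α).interior_eq]
  exact (strictMonoOn_chemPot α).congr fun y hy => (hasDerivAt_muF hy).deriv.symm

end FillingFactor

section Entropy

variable {N : ℕ} {α : ℝ}

lemma continuous_dotN (φ : Fin N → ℝ) : Continuous (dotN φ) := by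
  unfold dotN
  fun_prop

/-- The entropy functional (the `H`-functional) of the Boltzmann equation. -/
noncomputable def entropy (α : ℝ) (f : Fin N → ℝ) : ℝ := ∑ i, muF α (f i)

lemma continuousAt_entropy {f : Fin N → ℝ} (hf : ∀ i, f i ∈ occupationRange α) :
    ContinuousAt (entropy α) f :=
  tendsto_finsetSum _ fun i _ =>
    (hasDerivAt_muF (hf i)).continuousAt.comp' (f := fun g : Fin N → ℝ => g i)
      (continuous_apply i).continuousAt

lemma hasDerivAt_entropy_comp {f : ℝ → Fin N → ℝ} {f' : Fin N → ℝ} {t : ℝ}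
    (hft : ∀ i, f t i ∈ occupationRange α) (hf : HasDerivAt f f' t) :
    HasDerivAt (entropy α ∘ f) (dotN (chemPot α ∘ f t) f') t :=
  HasDerivAt.fun_sum (u := Finset.univ) (A := fun i s => muF α (f s i)) fun i _ =>
    (hasDerivAt_muF (hft i)).comp (h := fun s => f s i) t (hasDerivAt_pi.1 hf i)

lemma eq_of_entropy_le {P Q : Fin N → ℝ} (hP : ∀ i, P i ∈ occupationRange α)
    (hQ : ∀ i, Q i ∈ occupationRange α)
    (hdot : dotN (chemPot α ∘ P) Q = dotN (chemPot α ∘ P) P)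
    (hle : entropy α Q ≤ entropy α P) : Q = P := by
  have tangent_lt : ∀ i, Q i ≠ P i → muF α (P i) + chemPot α (P i) * (Q i - P i) < muF α (Q i) :=
    fun i hi => tangent_lt_of_strictConvexOn (strictConvexOn_muF α) (hP i) (hQ i) hi
      (hasDerivAt_muF (hP i))
  have tangent_le : ∀ i, muF α (P i) + chemPot α (P i) * (Q i - P i) ≤ muF α (Q i) := fun i => by
    rcases eq_or_ne (Q i) (P i) with hi | hi
    · rw [hi, sub_self, mul_zero, add_zero]
    · exact (tangent_lt i hi).le
  by_contra hne
  obtain ⟨i, hi⟩ := Function.ne_iff.1 hne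
  have hlt : ∑ i, (muF α (P i) + chemPot α (P i) * (Q i - P i)) < entropy α Q :=
    Finset.sum_lt_sum (fun i _ => tangent_le i) ⟨i, Finset.mem_univ i, tangent_lt i hi⟩
  refine hlt.not_ge (hle.trans_eq ?_)
  simp only [dotN, Function.comp_apply] at hdot
  simp only [mul_sub, Finset.sum_add_distrib, Finset.sum_sub_distrib, hdot, sub_self, add_zero,
    entropy]

end Entropy

section QuadrupleSums

variable {ι : Type*} [Fintype ι]

lemma sum_four_swap_pairs {M : Type*} [AddCommMonoid M] (f : ι → ι → ι → ι → M) :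
    ∑ i, ∑ j, ∑ k, ∑ l, f k l i j = ∑ i, ∑ j, ∑ k, ∑ l, f i j k l := by
  simpa only [Fintype.sum_prod_type] using
    Finset.sum_comm (s := Finset.univ) (t := Finset.univ)
      (f := fun x y : ι × ι => f y.1 y.2 x.1 x.2)

lemma sum_four_eq_zero_iff_of_nonpos {M : Type*} [AddCommMonoid M] [PartialOrder M]
    [IsOrderedAddMonoid M] {f : ι → ι → ι → ι → M} (hf : ∀ i j k l, f i j k l ≤ 0) :
    ∑ i, ∑ j, ∑ k, ∑ l, f i j k l = 0 ↔ ∀ i j k l, f i j k l = 0 := by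
  simpa only [Fintype.sum_prod_type, funext_iff, Prod.forall, Pi.zero_apply] using
    Fintype.sum_eq_zero_iff_of_nonpos (f := fun q : ι × ι × ι × ι => f q.1 q.2.1 q.2.2.1 q.2.2.2)
      fun q => hf q.1 q.2.1 q.2.2.1 q.2.2.2

lemma four_mul_sum_of_symm {R : Type*} [CommRing R] (φ : ι → R) {G : ι → ι → ι → ι → R}
    (hswap : ∀ i j k l, G j i k l = G i j k l) (hrev : ∀ i j k l, G k l i j = -G i j k l) :
    4 * ∑ i, ∑ j, ∑ k, ∑ l, φ i * G i j k l
      = ∑ i, ∑ j, ∑ k, ∑ l, (φ i + φ j - φ k - φ l) * G i j k l := by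
  have hj : ∑ i, ∑ j, ∑ k, ∑ l, φ j * G i j k l = ∑ i, ∑ j, ∑ k, ∑ l, φ i * G i j k l := by
    rw [Finset.sum_comm]
    refine Fintype.sum_congr _ _ fun i => Fintype.sum_congr _ _ fun j => ?_
    exact Fintype.sum_congr _ _ fun k => Fintype.sum_congr _ _ fun l => by rw [hswap i j k l]
  have sum_rev : ∀ ψ : ι → ι → R,
      ∑ i, ∑ j, ∑ k, ∑ l, ψ k l * G i j k l = -∑ i, ∑ j, ∑ k, ∑ l, ψ i j * G i j k l := fun ψ => by
    rw [← sum_four_swap_pairs]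
    simp only [← Finset.sum_neg_distrib, ← mul_neg, ← hrev]
  have hk := sum_rev fun k _ => φ k
  have hl := sum_rev fun _ l => φ l
  rw [hj] at hl
  simp only [sub_mul, add_mul, Finset.sum_sub_distrib, Finset.sum_add_distrib, hj, hk, hl]
  ring

end QuadrupleSums

section CollisionOperator

variable {N : ℕ} {α : ℝ} {Γ : Fin N → Fin N → Fin N → Fin N → ℝ} {f φ : Fin N → ℝ}

/-- Microreversibility of the collision coefficients: symmetry under exchange of the colliding
particles and under reversal of the collision. -/
structure IsMicroreversible (Γ : Fin N → Fin N → Fin N → Fin N → ℝ) : Prop where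
  swap : ∀ i j k l, Γ i j k l = Γ j i k l
  reverse : ∀ i j k l, Γ i j k l = Γ k l i j

/-- The net rate of the collisions `(k, l) → (i, j)` per unit of `Γ i j k l`, that is, the
bracket in `Qop`. -/
noncomputable def netRate (α : ℝ) (f : Fin N → ℝ) (i j k l : Fin N) : ℝ :=
  f k * f l * Psi α (f i) * Psi α (f j) - f i * f j * Psi α (f k) * Psi α (f l)

lemma four_mul_dotN_Qop (hΓ : IsMicroreversible Γ) (α : ℝ) (φ f : Fin N → ℝ) :
    4 * dotN φ (Qop α Γ f) = ∑ i, ∑ j, ∑ k, ∑ l,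
      (φ i + φ j - φ k - φ l) * (Γ i j k l * netRate α f i j k l) := by
  rw [← four_mul_sum_of_symm]
  · simp only [dotN, Qop, netRate, Finset.mul_sum]
  · intro i j k l
    rw [hΓ.swap j i k l, netRate, netRate]
    ring
  · intro i j k l
    rw [hΓ.reverse k l i j, netRate, netRate]
    ring

lemma dotN_Qop_eq_zero (hΓ : IsMicroreversible Γ) (α : ℝ) (hφ : IsCollInv Γ φ)
    (f : Fin N → ℝ) : dotN φ (Qop α Γ f) = 0 := by
  have term_eq_zero : ∀ i j k l,
      (φ i + φ j - φ k - φ l) * (Γ i j k l * netRate α f i j k l) = 0 := fun i j k l => by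
    rcases eq_or_ne (Γ i j k l) 0 with h | h
    · rw [h, zero_mul, mul_zero]
    · rw [sub_sub, sub_eq_zero.2 (hφ i j k l h), zero_mul]
  have h := four_mul_dotN_Qop hΓ α φ f
  simp only [term_eq_zero, Finset.sum_const_zero] at h
  linarith

lemma netRate_eq (hf : ∀ i, f i ∈ occupationRange α) (i j k l : Fin N) :
    netRate α f i j k l = Psi α (f i) * Psi α (f j) * Psi α (f k) * Psi α (f l) *
      (Real.exp (chemPot α (f k) + chemPot α (f l))
        - Real.exp (chemPot α (f i) + chemPot α (f j))) := by
  have Psi_ne : ∀ i, Psi α (f i) ≠ 0 := fun i => (Psi_pos (hf i)).ne'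
  have := Psi_ne i
  have := Psi_ne j
  have := Psi_ne k
  have := Psi_ne l
  simp only [netRate, Real.exp_add, exp_chemPot (hf _)]
  field_simp

lemma chemPot_mul_netRate_nonpos (hf : ∀ i, f i ∈ occupationRange α) (i j k l : Fin N) :
    (chemPot α (f i) + chemPot α (f j) - chemPot α (f k) - chemPot α (f l))
      * netRate α f i j k l ≤ 0 := by
  have hΨ : 0 ≤ Psi α (f i) * Psi α (f j) * Psi α (f k) * Psi α (f l) :=
    (mul_pos (mul_pos (mul_pos (Psi_pos (hf i)) (Psi_pos (hf j))) (Psi_pos (hf k)))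
      (Psi_pos (hf l))).le
  have hexp := (monotone_id.monovary Real.exp_monotone).sub_mul_sub_nonneg
    (chemPot α (f i) + chemPot α (f j)) (chemPot α (f k) + chemPot α (f l))
  rw [netRate_eq hf]
  simp only [id] at hexp
  linarith [mul_nonneg hΨ hexp]

lemma netRate_eq_zero_iff (hf : ∀ i, f i ∈ occupationRange α) (i j k l : Fin N) :
    netRate α f i j k l = 0 ↔
      chemPot α (f i) + chemPot α (f j) = chemPot α (f k) + chemPot α (f l) := by
  rw [netRate_eq hf]
  simp only [mul_eq_zero, (Psi_pos (hf _)).ne', false_or, sub_eq_zero, Real.exp_eq_exp]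
  exact eq_comm

/-- The rate of change of the entropy along solutions of the Boltzmann equation. -/
noncomputable def entropyRate (α : ℝ) (Γ : Fin N → Fin N → Fin N → Fin N → ℝ)
    (f : Fin N → ℝ) : ℝ :=
  dotN (chemPot α ∘ f) (Qop α Γ f)

lemma entropyRate_term_nonpos (hΓ : ∀ i j k l, 0 ≤ Γ i j k l)
    (hf : ∀ i, f i ∈ occupationRange α) (i j k l : Fin N) :
    (chemPot α (f i) + chemPot α (f j) - chemPot α (f k) - chemPot α (f l))
      * (Γ i j k l * netRate α f i j k l) ≤ 0 := by
  rw [mul_left_comm]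
  exact mul_nonpos_of_nonneg_of_nonpos (hΓ i j k l) (chemPot_mul_netRate_nonpos hf i j k l)

theorem entropyRate_nonpos (hΓ : IsMicroreversible Γ) (hΓ0 : ∀ i j k l, 0 ≤ Γ i j k l)
    (hf : ∀ i, f i ∈ occupationRange α) : entropyRate α Γ f ≤ 0 := by
  have h : 4 * entropyRate α Γ f ≤ 0 := (four_mul_dotN_Qop hΓ α _ f).trans_le <|
    Finset.sum_nonpos fun i _ => Finset.sum_nonpos fun j _ => Finset.sum_nonpos fun k _ =>
      Finset.sum_nonpos fun l _ => entropyRate_term_nonpos hΓ0 hf i j k l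
  linarith

theorem isCollInv_chemPot_of_entropyRate_eq_zero (hΓ : IsMicroreversible Γ)
    (hΓ0 : ∀ i j k l, 0 ≤ Γ i j k l) (hf : ∀ i, f i ∈ occupationRange α)
    (h : entropyRate α Γ f = 0) : IsCollInv Γ (chemPot α ∘ f) := by
  intro i j k l hijkl
  have hsum := four_mul_dotN_Qop hΓ α (chemPot α ∘ f) f
  rw [← entropyRate, h, mul_zero] at hsum
  have hterm := (sum_four_eq_zero_iff_of_nonpos (entropyRate_term_nonpos hΓ0 hf)).1 hsum.symm
  rcases mul_eq_zero.1 (hterm i j k l) with hpot | hrate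
  · exact sub_eq_zero.1 ((sub_sub _ _ _).symm.trans hpot)
  · exact (netRate_eq_zero_iff hf i j k l).1 ((mul_eq_zero.1 hrate).resolve_left hijkl)

lemma continuousAt_Qop (Γ : Fin N → Fin N → Fin N → Fin N → ℝ)
    (hf : ∀ i, f i ∈ occupationRange α) : ContinuousAt (Qop α Γ) f := by
  have hΨ : ∀ i, ContinuousAt (fun g : Fin N → ℝ => Psi α (g i)) f := fun i =>
    (continuousAt_Psi (hf i)).comp' (f := fun g : Fin N → ℝ => g i)
      (continuous_apply i).continuousAt
  unfold Qop
  fun_prop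

lemma continuousAt_entropyRate (Γ : Fin N → Fin N → Fin N → Fin N → ℝ)
    (hf : ∀ i, f i ∈ occupationRange α) : ContinuousAt (entropyRate α Γ) f :=
  tendsto_finsetSum Finset.univ fun i _ =>
    ((hasDerivAt_chemPot (hf i)).continuousAt.comp' (f := fun g : Fin N → ℝ => g i)
      (continuous_apply i).continuousAt).mul (continuousAt_pi.1 (continuousAt_Qop Γ hf) i)

end CollisionOperator

section Trajectories

open scoped Topology

variable {N : ℕ} {α a t : ℝ} {Γ : Fin N → Fin N → Fin N → Fin N → ℝ} {f : ℝ → Fin N → ℝ}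
  {φ P : Fin N → ℝ}

/-- Solutions of the spatially homogeneous Boltzmann equation on `[a, ∞)`. At the initial time `a`
only continuity is required. -/
structure IsTrajectory (α : ℝ) (Γ : Fin N → Fin N → Fin N → Fin N → ℝ) (a : ℝ)
    (f : ℝ → Fin N → ℝ) : Prop where
  continuousOn : ContinuousOn f (Set.Ici a)
  hasDerivAt : ∀ t, a < t → HasDerivAt f (Qop α Γ (f t)) t

namespace IsTrajectory

theorem dotN_eq (hf : IsTrajectory α Γ a f) (hΓ : IsMicroreversible Γ) (hφ : IsCollInv Γ φ)
    {s : ℝ} (hs : a ≤ s) (ht : a ≤ t) : dotN φ (f s) = dotN φ (f t) := by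
  refine eq_of_hasDerivAt_zero_of_continuousOn_Ici (g := fun r => dotN φ (f r))
    ((continuous_dotN φ).comp_continuousOn hf.continuousOn) (fun r hr => ?_) hs ht
  rw [← dotN_Qop_eq_zero hΓ α hφ (f r)]
  exact HasDerivAt.fun_sum fun i _ => (hasDerivAt_pi.1 (hf.hasDerivAt r hr) i).const_mul (φ i)

lemma dotN_eq_of_mapClusterPt (hf : IsTrajectory α Γ a f) (hΓ : IsMicroreversible Γ)
    (hφ : IsCollInv Γ φ) (ht : a ≤ t) (hP : MapClusterPt P atTop f) :
    dotN φ P = dotN φ (f t) := by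
  refine eq_of_mapClusterPt_of_tendsto
    (hP.continuousAt_comp (continuous_dotN φ).continuousAt) (tendsto_const_nhds.congr' ?_)
  filter_upwards [eventually_ge_atTop a] with s hs
  exact hf.dotN_eq hΓ hφ ht hs

theorem exists_tendsto (hf : IsTrajectory α Γ a f) (hΓ : IsMicroreversible Γ)
    (hΓ0 : ∀ i j k l, 0 ≤ Γ i j k l) {K : Set (Fin N → ℝ)} (hK : IsCompact K)
    (hKα : ∀ q ∈ K, ∀ i, q i ∈ occupationRange α) (hfK : ∀ᶠ t in atTop, f t ∈ K) :
    ∃ P ∈ K, IsCollInv Γ (chemPot α ∘ P) ∧ Tendsto f atTop (𝓝 P) := by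
  have collInv_of_rate : ∀ q ∈ K, entropyRate α Γ q = 0 → IsCollInv Γ (chemPot α ∘ q) :=
    fun q hq => isCollInv_chemPot_of_entropyRate_eq_zero hΓ hΓ0 (hKα q hq)
  obtain ⟨P, hPK, hP0, hlim⟩ := exists_tendsto_of_lyapunov (V := entropy α)
    (D := entropyRate α Γ) hK hfK (fun q hq => continuousAt_entropy (hKα q hq))
    (fun q hq => continuousAt_entropyRate Γ (hKα q hq))
    (fun q hq => entropyRate_nonpos hΓ hΓ0 (hKα q hq))
    (by
      filter_upwards [hfK, eventually_gt_atTop a] with t htK hat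
      exact hasDerivAt_entropy_comp (hKα _ htK) (hf.hasDerivAt t hat))
    (fun P hPK hP0 hPf Q hQK hQf hQP => by
      have conserved : ∀ q, MapClusterPt q atTop f →
          dotN (chemPot α ∘ P) q = dotN (chemPot α ∘ P) (f a) := fun q =>
        hf.dotN_eq_of_mapClusterPt hΓ (collInv_of_rate P hPK hP0) le_rfl
      exact eq_of_entropy_le (hKα P hPK) (hKα Q hQK)
        ((conserved Q hQf).trans (conserved P hPf).symm) hQP.le)
  exact ⟨P, hPK, collInv_of_rate P hPK hP0, hlim⟩

end IsTrajectory

lemma isTrajectory_ofLp {F F' : ℝ → EuclideanSpace ℝ (Fin N)}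
    (hdiff : ∀ t ∈ Set.Ici a, HasDerivWithinAt F (F' t) (Set.Ici a) t)
    (heq : ∀ t ∈ Set.Ioi a, ∀ i, F' t i = Qop α Γ (F t) i) :
    IsTrajectory α Γ a fun t => (F t).ofLp where
  continuousOn t ht :=
    (PiLp.continuous_ofLp 2 _).continuousAt.comp_continuousWithinAt
      (hdiff t ht).continuousWithinAt
  hasDerivAt t ht := by
    rw [← funext (heq t ht)]
    exact (PiLp.hasFDerivAt_ofLp (𝕜 := ℝ) 2 (F t)).comp_hasDerivAt t
      ((hdiff t (le_of_lt ht)).hasDerivAt (Ici_mem_nhds ht))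

end Trajectories

section Equilibria

variable {N d : ℕ} {α : ℝ} {p : Fin N → Fin d → ℝ} {Γ : Fin N → Fin N → Fin N → Fin N → ℝ}
  {P P' : Fin N → ℝ}

lemma isMicroreversible_of_gammaOK (hΓ : GammaOK p Γ) : IsMicroreversible Γ :=
  ⟨hΓ.2.1, hΓ.2.2.1⟩

lemma isCollInv_one (Γ : Fin N → Fin N → Fin N → Fin N → ℝ) : IsCollInv Γ fun _ => 1 :=
  fun _ _ _ _ _ => rfl

lemma isCollInv_momentum (hΓ : GammaOK p Γ) (m : Fin d) : IsCollInv Γ fun i => p i m :=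
  fun i j k l h => (hΓ.2.2.2 i j k l h).1 m

lemma isCollInv_energy (hΓ : GammaOK p Γ) : IsCollInv Γ fun i => ∑ m, (p i m) ^ 2 :=
  fun i j k l h => (hΓ.2.2.2 i j k l h).2

lemma isEquilib_iff (hα : 0 < α) : IsEquilib α p P ↔ (∀ i, P i ∈ occupationRange α) ∧
    ∃ (a c : ℝ) (b : Fin d → ℝ), ∀ i,
      chemPot α (P i) = a + (∑ m, b m * p i m) + c * ∑ m, (p i m) ^ 2 := by
  simp only [IsEquilib, mem_occupationRange_iff hα]
  refine and_congr_right fun hP => ⟨?_, ?_⟩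
  · rintro ⟨K, b, c, hK, h⟩
    refine ⟨Real.log K, -c, -b, fun i => Real.exp_injective ?_⟩
    rw [exp_chemPot ((mem_occupationRange_iff hα).2 (hP i)), h i, add_assoc, Real.exp_add,
      Real.exp_log hK]
    simp only [Pi.neg_apply, neg_mul, Finset.sum_neg_distrib, sub_eq_add_neg]
  · rintro ⟨a, c, b, h⟩
    refine ⟨Real.exp a, -b, -c, Real.exp_pos a, fun i => ?_⟩
    rw [← exp_chemPot ((mem_occupationRange_iff hα).2 (hP i)), h i, add_assoc, Real.exp_add]
    simp only [Pi.neg_apply, neg_mul, Finset.sum_neg_distrib, neg_neg, sub_neg_eq_add]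

lemma dotN_affine (p : Fin N → Fin d → ℝ) (a c : ℝ) (b : Fin d → ℝ) (f : Fin N → ℝ) :
    dotN (fun i => a + (∑ m, b m * p i m) + c * ∑ m, (p i m) ^ 2) f
      = a * dotN (fun _ => 1) f + (∑ m, b m * dotN (fun i => p i m) f)
        + c * dotN (fun i => ∑ m, (p i m) ^ 2) f := by
  have hmom : ∑ i, (∑ m, b m * p i m) * f i = ∑ m, b m * ∑ i, p i m * f i := by
    simp only [Finset.sum_mul, Finset.mul_sum, mul_assoc]
    exact Finset.sum_comm
  simp only [dotN, add_mul, Finset.sum_add_distrib, hmom, one_mul, mul_assoc, ← Finset.mul_sum]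

theorem isEquilib_unique (hα : 0 < α) (hP : IsEquilib α p P) (hP' : IsEquilib α p P')
    (hmass : dotN (fun _ => 1) P' = dotN (fun _ => 1) P)
    (hmomentum : ∀ m, dotN (fun i => p i m) P' = dotN (fun i => p i m) P)
    (henergy : dotN (fun i => ∑ m, (p i m) ^ 2) P' = dotN (fun i => ∑ m, (p i m) ^ 2) P) :
    P' = P := by
  have dotN_eq : ∀ R, IsEquilib α p R → dotN (chemPot α ∘ R) P' = dotN (chemPot α ∘ R) P :=
    fun R hR => by
      obtain ⟨-, a, c, b, h⟩ := (isEquilib_iff hα).1 hR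
      rw [show chemPot α ∘ R = _ from funext h, dotN_affine, dotN_affine, hmass, henergy]
      simp only [hmomentum]
  have hPα := ((isEquilib_iff hα).1 hP).1
  have hPα' := ((isEquilib_iff hα).1 hP').1
  rcases le_total (entropy α P') (entropy α P) with hle | hle
  · exact eq_of_entropy_le hPα hPα' (dotN_eq P hP) hle
  · exact (eq_of_entropy_le hPα' hPα (dotN_eq P' hP').symm hle).symm

end Equilibria

theorem stmt13_general {N d : ℕ} {α : ℝ} (hα0 : 0 < α) {p : Fin N → Fin d → ℝ}
    {Γ : Fin N → Fin N → Fin N → Fin N → ℝ} (hΓ : GammaOK p Γ) (hnorm : IsNormal p Γ)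
    {F F' : ℝ → EuclideanSpace ℝ (Fin N)}
    (hdiff : ∀ t ∈ Set.Ici (0 : ℝ), HasDerivWithinAt F (F' t) (Set.Ici 0) t)
    (heq : ∀ t ∈ Set.Ioi (0 : ℝ), ∀ i, F' t i = Qop α Γ (F t) i)
    {η t₀ : ℝ} (hη : 0 < η)
    (hbound : ∀ t, t₀ ≤ t → ∀ i, η ≤ F t i ∧ F t i ≤ 1 / α - η) :
    ∃ P : EuclideanSpace ℝ (Fin N),
      Filter.Tendsto F Filter.atTop (nhds P) ∧
      IsEquilib α p P ∧
      (∀ t, (0 : ℝ) ≤ t →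
        dotN (fun _ => 1) P = dotN (fun _ => 1) (F t) ∧
        (∀ m : Fin d, dotN (fun i => p i m) P = dotN (fun i => p i m) (F t)) ∧
        dotN (fun i => ∑ m, (p i m) ^ 2) P
          = dotN (fun i => ∑ m, (p i m) ^ 2) (F t)) ∧
      (∀ P' : EuclideanSpace ℝ (Fin N), IsEquilib α p P' →
        dotN (fun _ => 1) P' = dotN (fun _ => 1) P →
        (∀ m : Fin d, dotN (fun i => p i m) P' = dotN (fun i => p i m) P) →
        dotN (fun i => ∑ m, (p i m) ^ 2) P' = dotN (fun i => ∑ m, (p i m) ^ 2) P →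
        P' = P) := by
  have hF := isTrajectory_ofLp hdiff heq
  have hrev := isMicroreversible_of_gammaOK hΓ
  have box_subset : ∀ q ∈ Set.univ.pi fun _ : Fin N => Set.Icc η (1 / α - η),
      ∀ i, q i ∈ occupationRange α := fun q hq i => (mem_occupationRange_iff hα0).2
    ⟨hη.trans_le (hq i trivial).1, (hq i trivial).2.trans_lt (sub_lt_self _ hη)⟩
  obtain ⟨P, hPbox, hPinv, hlim⟩ := hF.exists_tendsto hrev hΓ.1
    (isCompact_univ_pi fun _ => isCompact_Icc) box_subset
    ((eventually_ge_atTop t₀).mono fun t ht i _ => hbound t ht i)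
  have hPeq : IsEquilib α p P := (isEquilib_iff hα0).2 ⟨box_subset P hPbox, hnorm _ hPinv⟩
  have moment_eq : ∀ φ, IsCollInv Γ φ → ∀ t, 0 ≤ t → dotN φ P = dotN φ (F t) :=
    fun φ hφ t ht => hF.dotN_eq_of_mapClusterPt hrev hφ ht hlim.mapClusterPt
  exact ⟨WithLp.toLp 2 P, ((PiLp.continuous_toLp 2 _).tendsto P).comp hlim, hPeq,
    fun t ht => ⟨moment_eq _ (isCollInv_one Γ) t ht,
      fun m => moment_eq _ (isCollInv_momentum hΓ m) t ht,
      moment_eq _ (isCollInv_energy hΓ) t ht⟩,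
    fun P' hP' hmass hmomentum henergy =>
      WithLp.ofLp_injective 2 (isEquilib_unique hα0 hPeq hP' hmass hmomentum henergy)⟩

/-- Theorem 8: trend to equilibrium for the spatially homogeneous
system. -/
theorem stmt13 {N d : ℕ} (hN : 0 < N) (hd : 0 < d)
    (α : ℝ) (hα0 : 0 < α) (hα1 : α < 1)
    (p : Fin N → Fin d → ℝ) (Γ : Fin N → Fin N → Fin N → Fin N → ℝ)
    (hΓ : GammaOK p Γ) (hnorm : IsNormal p Γ)
    (F F' : ℝ → EuclideanSpace ℝ (Fin N))
    (hdiff : ∀ t ∈ Set.Ici (0 : ℝ), HasDerivWithinAt F (F' t) (Set.Ici 0) t)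
    (hbdd : ∃ C : ℝ, ∀ t ∈ Set.Ici (0 : ℝ), ‖F t‖ ≤ C)
    (heq : ∀ t ∈ Set.Ioi (0 : ℝ), ∀ i, F' t i = Qop α Γ (F t) i)
    (η t₀ : ℝ) (hη : 0 < η) (ht₀ : 0 ≤ t₀)
    (hbound : ∀ t, t₀ ≤ t → ∀ i, η ≤ F t i ∧ F t i ≤ 1 / α - η) :
    ∃ P : EuclideanSpace ℝ (Fin N),
      Filter.Tendsto F Filter.atTop (nhds P) ∧
      IsEquilib α p P ∧
      (∀ t, (0 : ℝ) ≤ t →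
        dotN (fun _ => 1) P = dotN (fun _ => 1) (F t) ∧
        (∀ m : Fin d, dotN (fun i => p i m) P = dotN (fun i => p i m) (F t)) ∧
        dotN (fun i => ∑ m, (p i m) ^ 2) P
          = dotN (fun i => ∑ m, (p i m) ^ 2) (F t)) ∧
      (∀ P' : EuclideanSpace ℝ (Fin N), IsEquilib α p P' →
        dotN (fun _ => 1) P' = dotN (fun _ => 1) P →
        (∀ m : Fin d, dotN (fun i => p i m) P' = dotN (fun i => p i m) P) →
        dotN (fun i => ∑ m, (p i m) ^ 2) P' = dotN (fun i => ∑ m, (p i m) ^ 2) P →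
        P' = P) :=
  stmt13_general hα0 hΓ hnorm hdiff heq hη hbound
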